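/- Let a0 ∈ ℝ^k with ‖a0‖₂ = 1 and λ > 0. Let σ ∈ {−1, 0, 1}^m with support I = supp(σ), and let a ∈ ℝ^k with ‖a‖₂ = 1 satisfy sign(S_λ((Č_{a0})* ι a)) = σ (entrywise). Then φ̂(a) = −½ aᵀ ι* Č_{a0} P_I (Č_{a0})* ι a + λ σᵀ P_I (Č_{a0})* ι a + ½ − λ²|I|/2, where P_I is the m×m diagonal 0/1 projection matrix onto the coordinates in I. -/

import Mathlib

open scoped BigOperators Matrix

attribute [local instance 10] Classical.propDecidable

noncomputable section

/-- The index `t mod m` as an element of `Fin m`. -/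
def idx (m : ℕ) [NeZero m] (t : ℤ) : Fin m :=
  ⟨(t % (m : ℤ)).toNat, by
    have hm : 0 < m := Nat.pos_of_ne_zero (NeZero.ne m)
    have hm' : (0 : ℤ) < (m : ℤ) := by exact_mod_cast hm
    have h1 : 0 ≤ t % (m : ℤ) := Int.emod_nonneg t (ne_of_gt hm')
    have h2 : t % (m : ℤ) < (m : ℤ) := Int.emod_lt_of_pos t hm'
    omega⟩

/-- Cyclic shift: `(cshift τ v) i = v ((i - τ) mod m)`. -/
def cshift {m : ℕ} [NeZero m] (τ : ℤ) (v : Fin m → ℝ) : Fin m → ℝ :=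
  fun i => v (idx m ((i : ℤ) - τ))

/-- Zero padding `ι : ℝ^k → ℝ^m`. -/
def pad (k m : ℕ) (a : Fin k → ℝ) : Fin m → ℝ :=
  fun i => if h : (i : ℕ) < k then a ⟨i, h⟩ else 0

/-- Restriction to the first `k` coordinates, `ι* : ℝ^m → ℝ^k`. -/
def unpad {k m : ℕ} (h : k ≤ m) (v : Fin m → ℝ) : Fin k → ℝ :=
  fun j => v (Fin.castLE h j)

/-- Circulant matrix `C_w` whose `j`-th column is `s_j[w]`. -/
def circ {m : ℕ} [NeZero m] (w : Fin m → ℝ) : Matrix (Fin m) (Fin m) ℝ :=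
  Matrix.of fun i j => cshift (j : ℤ) w i

/-- Reversed circulant matrix `Č_{a0}` whose `j`-th column is `s_{-j}[ι a0]`. -/
def rcirc (k m : ℕ) [NeZero m] (a0 : Fin k → ℝ) : Matrix (Fin m) (Fin m) ℝ :=
  Matrix.of fun i j => cshift (-(j : ℤ)) (pad k m a0) i

/-- Circular convolution `w ⊛ x = C_w x`. -/
def conv {m : ℕ} [NeZero m] (w x : Fin m → ℝ) : Fin m → ℝ := (circ w).mulVec x

def dotp {α : Type*} [Fintype α] (u v : α → ℝ) : ℝ := ∑ i, u i * v i

def l2sq {α : Type*} [Fintype α] (v : α → ℝ) : ℝ := ∑ i, v i ^ 2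

def l2norm {α : Type*} [Fintype α] (v : α → ℝ) : ℝ := Real.sqrt (l2sq v)

def l1norm {α : Type*} [Fintype α] (v : α → ℝ) : ℝ := ∑ i, |v i|

/-- Scalar soft-thresholding. -/
def soft (lam t : ℝ) : ℝ := Real.sign t * max (|t| - lam) 0

/-- Entrywise soft-thresholding `S_λ`. -/
def softvec {m : ℕ} (lam : ℝ) (u : Fin m → ℝ) : Fin m → ℝ := fun i => soft lam (u i)

/-- The shift truncation `ι* s_{-τ}[ι a0] ∈ ℝ^k`. -/
def shiftTrunc {k m : ℕ} [NeZero m] (h : k ≤ m) (a0 : Fin k → ℝ) (τ : Fin m) : Fin k → ℝ :=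
  unpad h (cshift (-(τ : ℤ)) (pad k m a0))

/-- The inner objective of the simplified marginal problem. -/
def phiHatInner (k m : ℕ) [NeZero m] (lam : ℝ) (a0 a : Fin k → ℝ) (x : Fin m → ℝ) : ℝ :=
  l2sq (pad k m a0) / 2 + l2sq x / 2 - dotp (conv (pad k m a) x) (pad k m a0) + lam * l1norm x

/-- The simplified marginal objective `φ̂`. -/
def phiHat (k m : ℕ) [NeZero m] (lam : ℝ) (a0 a : Fin k → ℝ) : ℝ :=
  sInf (Set.range (phiHatInner k m lam a0 a))

/-- Zero-padding `ι` as an `m × k` matrix. -/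
def padM (k m : ℕ) : Matrix (Fin m) (Fin k) ℝ :=
  Matrix.of fun i j => if (i : ℕ) = (j : ℕ) then 1 else 0

/-- The diagonal 0/1 projection matrix `P_I`. -/
def projM {m : ℕ} (I : Set (Fin m)) : Matrix (Fin m) (Fin m) ℝ :=
  Matrix.of fun i j => if i = j ∧ i ∈ I then 1 else 0

/-- The `ℓ² → ℓ²` operator norm of a matrix. -/
def opNorm {α β : Type*} [Fintype α] [Fintype β] (A : Matrix α β ℝ) : ℝ :=
  sSup {c | ∃ v : β → ℝ, l2norm v = 1 ∧ c = l2norm (A.mulVec v)}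

/-- The `ℓ² → ℓ∞` operator norm of a matrix. -/
def l2linfNorm {α β : Type*} [Fintype α] [Fintype β] (A : Matrix α β ℝ) : ℝ :=
  sSup {c | ∃ v : β → ℝ, l2norm v = 1 ∧ c = sSup {d | ∃ i, d = |A.mulVec v i|}}

/-- The smallest eigenvalue of a symmetric matrix, via the Rayleigh quotient. -/
def lamMin {n : ℕ} (A : Matrix (Fin n) (Fin n) ℝ) : ℝ :=
  sInf {c | ∃ v : Fin n → ℝ, l2sq v = 1 ∧ c = dotp v (A.mulVec v)}

/-- `‖v‖_p^p = ∑ |v i|^p` for a real exponent `p`. -/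
def lpPow {α : Type*} [Fintype α] (p : ℝ) (v : α → ℝ) : ℝ := ∑ i, |v i| ^ p

/-- The `ℓ^p` norm with real exponent `p`. -/
def lpNorm {α : Type*} [Fintype α] (p : ℝ) (v : α → ℝ) : ℝ := (lpPow p v) ^ (1 / p)

/-- The continuous linear functional `v ↦ ⟨g, v⟩` on `ℝ^n`. -/
def dotCLM {n : ℕ} (g : Fin n → ℝ) : (Fin n → ℝ) →L[ℝ] ℝ :=
  LinearMap.toContinuousLinearMap
    { toFun := fun v => dotp g v
      map_add' := fun x y => by
        simp [dotp, mul_add, Finset.sum_add_distrib]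
      map_smul' := fun c x => by
        simp only [dotp, Pi.smul_apply, smul_eq_mul, RingHom.id_apply, Finset.mul_sum]
        exact Finset.sum_congr rfl fun i _ => by ring }

/-!
Moving the convolution to the other side of the inner product turns the inner objective into
`½‖ι a0‖² + ∑ i, (½ xᵢ² - uᵢ xᵢ + λ|xᵢ|)` with `u = Čᵀ ι a`. Each summand is minimized at
`xᵢ = S_λ(uᵢ)`, with value `-½ S_λ(uᵢ)²`, so `φ̂(a) = ½‖ι a0‖² - ½‖S_λ(Čᵀ ι a)‖²` for every `a`.
Where the signs of `S_λ(u)` form the pattern `σ`, thresholding is the affine map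
`S_λ(u) = P_I (u - λσ)`, and expanding its squared norm gives the quadratic form.
-/

section Shift

variable {m : ℕ} [NeZero m]

open Fin.CommRing in
theorem cshift_apply (τ : ℤ) (v : Fin m → ℝ) (i : Fin m) : cshift τ v i = v (i - (τ : Fin m)) := by
  have idx_eq_intCast (t : ℤ) : idx m t = (t : Fin m) := Fin.ext (Fin.val_intCast t).symm
  simp only [cshift, idx_eq_intCast, Int.cast_sub, Int.cast_natCast, Fin.cast_val_eq_self]

open Fin.CommRing in
theorem dotp_cshift_left (τ : ℤ) (v w : Fin m → ℝ) :
    dotp (cshift τ v) w = dotp v (cshift (-τ) w) := by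
  rw [dotp, ← Equiv.sum_comp (Equiv.addRight (τ : Fin m))]
  simp only [dotp, cshift_apply, Equiv.coe_addRight, add_sub_cancel_right, Int.cast_neg,
    sub_neg_eq_add]

theorem dotp_conv_pad {k : ℕ} (w x : Fin m → ℝ) (a0 : Fin k → ℝ) :
    dotp (conv w x) (pad k m a0) = dotp ((rcirc k m a0)ᵀ *ᵥ w) x := by
  have circ_transpose_mulVec : (circ w)ᵀ *ᵥ pad k m a0 = (rcirc k m a0)ᵀ *ᵥ w := by
    ext j
    exact (dotp_cshift_left (j : ℤ) w (pad k m a0)).trans (dotProduct_comm _ _)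
  calc (circ w *ᵥ x) ⬝ᵥ pad k m a0
      = ((circ w)ᵀ *ᵥ pad k m a0) ⬝ᵥ x := by
        rw [dotProduct_comm, Matrix.dotProduct_mulVec, Matrix.mulVec_transpose]
    _ = ((rcirc k m a0)ᵀ *ᵥ w) ⬝ᵥ x := by rw [circ_transpose_mulVec]

end Shift

section Padding

variable {k m : ℕ}

theorem padM_mulVec (a : Fin k → ℝ) : padM k m *ᵥ a = pad k m a := by
  ext i
  by_cases hi : (i : ℕ) < k
  · have hrow (j : Fin k) : (i : ℕ) = j ↔ ⟨i, hi⟩ = j := by rw [Fin.ext_iff]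
    simp [padM, pad, Matrix.mulVec, dotProduct, hi, hrow]
  · have hrow (j : Fin k) : (i : ℕ) ≠ j := by lia
    simp [padM, pad, Matrix.mulVec, dotProduct, hi, hrow]

theorem l2sq_pad (hkm : k ≤ m) (a : Fin k → ℝ) : l2sq (pad k m a) = l2sq a := by
  obtain ⟨n, rfl⟩ := Nat.exists_eq_add_of_le hkm
  simp [l2sq, pad, Fin.sum_univ_add]

end Padding

section EuclideanForms

variable {α β : Type*} [Fintype α] [Fintype β]

theorem l2sq_eq_one_of_l2norm_eq_one {v : α → ℝ} (hv : l2norm v = 1) : l2sq v = 1 :=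
  Real.sqrt_eq_one.mp hv

theorem dotp_transpose_mul_mul_mulVec (B : Matrix α β ℝ) (P : Matrix α α ℝ) (v : β → ℝ) :
    dotp v ((Bᵀ * P * B) *ᵥ v) = dotp (B *ᵥ v) (P *ᵥ (B *ᵥ v)) := by
  change v ⬝ᵥ _ = (B *ᵥ v) ⬝ᵥ _
  rw [Matrix.mul_assoc, ← Matrix.mulVec_mulVec, ← Matrix.mulVec_mulVec, Matrix.dotProduct_mulVec,
    Matrix.vecMul_transpose]

end EuclideanForms

theorem projM_mulVec {m : ℕ} (I : Set (Fin m)) (v : Fin m → ℝ) : projM I *ᵥ v = I.indicator v := by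
  ext i
  simp [projM, Matrix.mulVec, dotProduct, Set.indicator_apply, ite_and]

section SoftThreshold

variable {lam : ℝ}

theorem soft_of_abs_le {t : ℝ} (ht : |t| ≤ lam) : soft lam t = 0 := by
  rw [soft, max_eq_right (sub_nonpos.mpr ht), mul_zero]

theorem soft_eq_sub_mul_sign {t : ℝ} (ht : soft lam t ≠ 0) :
    soft lam t = t - lam * Real.sign (soft lam t) := by
  have hlt : 0 < |t| - lam := by
    contrapose! ht
    exact soft_of_abs_le (sub_nonpos.mp ht)
  have hsoft : soft lam t = Real.sign t * (|t| - lam) := by rw [soft, max_eq_left hlt.le]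
  rcases lt_trichotomy t 0 with hneg | rfl | hpos
  · rw [Real.sign_of_neg hneg] at hsoft
    rw [Real.sign_of_neg (by linarith), hsoft, abs_of_neg hneg]
    ring
  · simp [soft] at ht
  · rw [Real.sign_of_pos hpos] at hsoft
    rw [Real.sign_of_pos (by linarith), hsoft, abs_of_pos hpos]
    ring

theorem sub_soft_mul_soft (t : ℝ) : (t - soft lam t) * soft lam t = lam * |soft lam t| := by
  by_cases hzero : soft lam t = 0
  · simp [hzero]
  · have sign_mul_self : Real.sign (soft lam t) * soft lam t = |soft lam t| := by
      rcases lt_or_gt_of_ne hzero with hneg | hpos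
      · rw [Real.sign_of_neg hneg, abs_of_neg hneg, neg_one_mul]
      · rw [Real.sign_of_pos hpos, abs_of_pos hpos, one_mul]
    linear_combination lam * sign_mul_self - soft lam t * soft_eq_sub_mul_sign hzero

theorem abs_sub_soft_le (hlam : 0 ≤ lam) (t : ℝ) : |t - soft lam t| ≤ lam := by
  by_cases hzero : soft lam t = 0
  · rw [hzero, sub_zero]
    by_contra! hlt
    have ht : t ≠ 0 := abs_pos.mp (hlam.trans_lt hlt)
    simp [soft, Real.sign_eq_zero_iff, ht, hlt.not_ge] at hzero
  · rw [← mul_le_mul_iff_left₀ (abs_pos.mpr hzero), ← abs_mul, sub_soft_mul_soft, abs_mul, abs_abs,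
      abs_of_nonneg hlam]

theorem prox_objective_soft (t : ℝ) :
    soft lam t ^ 2 / 2 - t * soft lam t + lam * |soft lam t| = -(soft lam t ^ 2 / 2) := by
  linear_combination -sub_soft_mul_soft (lam := lam) t

theorem neg_soft_sq_div_two_le (hlam : 0 ≤ lam) (t x : ℝ) :
    -(soft lam t ^ 2 / 2) ≤ x ^ 2 / 2 - t * x + lam * |x| := by
  have subgradient_le : (t - soft lam t) * x ≤ lam * |x| :=
    calc (t - soft lam t) * x ≤ |t - soft lam t| * |x| := by
          rw [← abs_mul]
          exact le_abs_self _
      _ ≤ lam * |x| := by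
          gcongr
          exact abs_sub_soft_le hlam t
  linarith [sq_nonneg (x - soft lam t)]

variable {m : ℕ}

theorem isLeast_range_prox_objective (hlam : 0 ≤ lam) (u : Fin m → ℝ) :
    IsLeast (Set.range fun x ↦ l2sq x / 2 - dotp u x + lam * l1norm x)
      (-(l2sq (softvec lam u) / 2)) := by
  have objective_eq_sum (x : Fin m → ℝ) : l2sq x / 2 - dotp u x + lam * l1norm x =
      ∑ i, (x i ^ 2 / 2 - u i * x i + lam * |x i|) := by
    simp only [l2sq, dotp, l1norm, Finset.sum_add_distrib, Finset.sum_sub_distrib, Finset.sum_div,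
      Finset.mul_sum]
  have value_eq_sum : -(l2sq (softvec lam u) / 2) = ∑ i, -(soft lam (u i) ^ 2 / 2) := by
    simp only [l2sq, softvec, Finset.sum_div, Finset.sum_neg_distrib]
  simp only [objective_eq_sum, value_eq_sum]
  constructor
  · exact ⟨softvec lam u, Finset.sum_congr rfl fun i _ ↦ prox_objective_soft (u i)⟩
  · rintro _ ⟨x, rfl⟩
    exact Finset.sum_le_sum fun i _ ↦ neg_soft_sq_div_two_le hlam (u i) (x i)

variable {u σ : Fin m → ℝ}

theorem softvec_eq_projM_mulVec (hsign : ∀ i, Real.sign (softvec lam u i) = σ i) :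
    softvec lam u = projM {i | σ i ≠ 0} *ᵥ (u - lam • σ) := by
  ext i
  rw [projM_mulVec, Set.indicator_apply]
  split_ifs with hi
  · have hne : softvec lam u i ≠ 0 := fun h ↦ hi (by rw [← hsign i, h, Real.sign_zero])
    rw [Pi.sub_apply, Pi.smul_apply, ← hsign i]
    exact soft_eq_sub_mul_sign hne
  · exact Real.sign_eq_zero_iff.mp ((hsign i).trans (not_not.mp hi))

theorem l2sq_softvec_of_sign (hsign : ∀ i, Real.sign (softvec lam u i) = σ i) :
    l2sq (softvec lam u) =
      dotp u (projM {i | σ i ≠ 0} *ᵥ u) - 2 * lam * dotp σ (projM {i | σ i ≠ 0} *ᵥ u)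
        + lam ^ 2 * ({i | σ i ≠ 0} : Set (Fin m)).ncard := by
  have sq_of_mem_support (i : Fin m) (hi : σ i ≠ 0) : σ i ^ 2 = 1 := by
    have hne : softvec lam u i ≠ 0 := fun h ↦ hi (by rw [← hsign i, h, Real.sign_zero])
    rw [← hsign i]
    rcases Real.sign_apply_eq_of_ne_zero _ hne with h | h <;> norm_num [h]
  have ncard_eq_sum :
      (({i | σ i ≠ 0} : Set (Fin m)).ncard : ℝ) = ∑ i, if σ i ≠ 0 then (1 : ℝ) else 0 := by
    rw [Finset.sum_boole, Set.ncard_eq_toFinset_card']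
    congr 2
    ext i
    simp
  rw [softvec_eq_projM_mulVec hsign, ncard_eq_sum]
  simp only [l2sq, dotp, projM_mulVec, Finset.mul_sum, ← Finset.sum_sub_distrib,
    ← Finset.sum_add_distrib]
  refine Finset.sum_congr rfl fun i _ ↦ ?_
  by_cases hi : σ i = 0
  · simp [hi]
  · simp only [Set.indicator_apply, Set.mem_ofPred_eq, hi, ne_eq, not_false_eq_true, if_true,
      Pi.sub_apply, Pi.smul_apply, smul_eq_mul]
    linear_combination lam ^ 2 * sq_of_mem_support i hi

end SoftThreshold

section MarginalObjective

variable {k m : ℕ} [NeZero m] {lam : ℝ}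

theorem phiHatInner_eq (a0 a : Fin k → ℝ) (x : Fin m → ℝ) :
    phiHatInner k m lam a0 a x = l2sq (pad k m a0) / 2 +
      (l2sq x / 2 - dotp ((rcirc k m a0)ᵀ *ᵥ pad k m a) x + lam * l1norm x) := by
  rw [phiHatInner, dotp_conv_pad]
  ring

theorem phiHat_eq_sub_l2sq_softvec (hlam : 0 ≤ lam) (a0 a : Fin k → ℝ) :
    phiHat k m lam a0 a =
      l2sq (pad k m a0) / 2 - l2sq (softvec lam ((rcirc k m a0)ᵀ *ᵥ pad k m a)) / 2 := by
  have hleast := (add_right_mono (a := l2sq (pad k m a0) / 2)).map_isLeast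
    (isLeast_range_prox_objective hlam ((rcirc k m a0)ᵀ *ᵥ pad k m a))
  rw [← Set.range_comp] at hleast
  rw [phiHat, funext (phiHatInner_eq a0 a), sub_eq_add_neg]
  exact hleast.csInf_eq

theorem stmt_4_general (hkm : k ≤ m) (hlam : 0 ≤ lam) (a0 a : Fin k → ℝ) (σ : Fin m → ℝ)
    (hsign : ∀ i, Real.sign (softvec lam (((rcirc k m a0)ᵀ).mulVec (pad k m a)) i) = σ i) :
    phiHat k m lam a0 a =
      -(1 / 2) * dotp a
          (((padM k m)ᵀ * rcirc k m a0 * projM {i | σ i ≠ 0} * (rcirc k m a0)ᵀ *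
            padM k m).mulVec a)
        + lam * dotp σ ((projM {i | σ i ≠ 0} * (rcirc k m a0)ᵀ * padM k m).mulVec a)
        + l2sq a0 / 2 - lam ^ 2 * ({i | σ i ≠ 0} : Set (Fin m)).ncard / 2 := by
  have mulVec_eq : ((rcirc k m a0)ᵀ * padM k m) *ᵥ a = (rcirc k m a0)ᵀ *ᵥ pad k m a := by
    rw [← Matrix.mulVec_mulVec, padM_mulVec]
  have gram_eq : (padM k m)ᵀ * rcirc k m a0 * projM {i | σ i ≠ 0} * (rcirc k m a0)ᵀ * padM k m =
      ((rcirc k m a0)ᵀ * padM k m)ᵀ * projM {i | σ i ≠ 0} * ((rcirc k m a0)ᵀ * padM k m) := by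
    simp only [Matrix.transpose_mul, Matrix.transpose_transpose, Matrix.mul_assoc]
  rw [phiHat_eq_sub_l2sq_softvec hlam, l2sq_pad hkm, l2sq_softvec_of_sign hsign, gram_eq,
    dotp_transpose_mul_mul_mulVec, Matrix.mul_assoc (projM _),
    ← Matrix.mulVec_mulVec (M := projM _), mulVec_eq]
  ring

end MarginalObjective

/-- on a region of constant sign-support pattern `σ`, the marginal
objective `φ̂` has the closed quadratic form
`φ̂(a) = −½ aᵀ ι* Č P_I Čᵀ ι a + λ σᵀ P_I Čᵀ ι a + ½ − λ²|I|/2`. -/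
theorem stmt_4 {k m : ℕ} [NeZero m] (hkm : k ≤ m) (lam : ℝ) (hlam : 0 < lam)
    (a0 a : Fin k → ℝ) (ha0 : l2norm a0 = 1) (ha : l2norm a = 1)
    (σ : Fin m → ℝ) (hσval : ∀ i, σ i = -1 ∨ σ i = 0 ∨ σ i = 1)
    (hsign : ∀ i, Real.sign (softvec lam (((rcirc k m a0)ᵀ).mulVec (pad k m a)) i) = σ i) :
    phiHat k m lam a0 a =
      -(1 / 2) * dotp a
          (((padM k m)ᵀ * rcirc k m a0 * projM {i | σ i ≠ 0} * (rcirc k m a0)ᵀ *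
            padM k m).mulVec a)
        + lam * dotp σ ((projM {i | σ i ≠ 0} * (rcirc k m a0)ᵀ * padM k m).mulVec a)
        + 1 / 2 - lam ^ 2 * ({i | σ i ≠ 0} : Set (Fin m)).ncard / 2 := by
  have h := stmt_4_general hkm hlam.le a0 a σ hsign
  rwa [l2sq_eq_one_of_l2norm_eq_one ha0] at h

end
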